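/- (Power balance of the piezo-actuated Kirchhoff–Love plate.) Let $B=[0,L_1]\times[0,L_2]$, let $\mu,\Xi:B\to(0,\infty)$ be smooth with $\partial_1\Xi = \partial_2\Xi = 0$ on $\partial B$, let $\nu\in\mathbb{R}$, let $g_{21},g_{22}:B\to\mathbb{R}$ be smooth, and let $u^1,u^2:\mathbb{R}\to\mathbb{R}$. Let $w:\mathbb{R}\times B\to\mathbb{R}$ be a smooth solution of $\mu\ddot{w} = -\partial_1^2\big(\Xi(w_{[20]}+\nu w_{[02]})\big) - \partial_2^2\big(\Xi(\nu w_{[20]}+w_{[02]})\big) - 2\partial_1\partial_2\big(\Xi(1-\nu)w_{[11]}\big) + g_{21}u^1 + g_{22}u^2$ satisfying, for all $t$: clamped conditions $w = 0$ and $w_{[10]} = 0$ on the edge $z^1 = 0$; free-edge conditions $w_{[20]}+\nu w_{[02]} = 0$ and $w_{[30]}+(2-\nu)w_{[12]} = 0$ on the edge $z^1 = L_1$; free-edge conditions $w_{[02]}+\nu w_{[20]} = 0$ and $w_{[03]}+(2-\nu)w_{[21]} = 0$ on the edges $z^2 = 0$ and $z^2 = L_2$; and the corner conditions $w_{[11]}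 = 0$ at the free corners $(L_1,0)$ and $(L_1,L_2)$. Then the total energy $\mathscr{H}(t) = \iint_B\Big(\frac{\mu}{2}\dot{w}^2 + \frac{\Xi}{2}\big(w_{[20]}^2 + w_{[02]}^2 + 2\nu w_{[20]}w_{[02]} + 2(1-\nu)w_{[11]}^2\big)\Big)dz^1dz^2$ satisfies $\frac{d\mathscr{H}}{dt}(t) = \iint_B\big(g_{21}\,\dot{w}\,u^1(t) + g_{22}\,\dot{w}\,u^2(t)\big)\,dz^1dz^2$ for all $t$. -/

import Mathlib

/-!
Differentiating the energy density in time gives `μ ẇ ẅ` plus the contraction of the moment tensor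
`M` with the Hessian of the velocity `ẇ`. Two integrations by parts (Green's identity for plates)
move that Hessian onto `M`, producing `ẇ div div M`, one integral over each edge of bending moments
and effective shear forces working on `∇ẇ` and `ẇ`, and the twisting moments working on `ẇ` at the
corners. The clamped edge kills `ẇ` and `∂₁ẇ`, the free edges and corners kill the forces, and what
remains in the interior is the work of the load by the equation of motion.
-/

open MeasureTheory

/-- Time derivative of a field `f(t,z¹,z²)`. -/
noncomputable def pt2 {E : Type*} [NormedAddCommGroup E] [NormedSpace ℝ E]
    (f : ℝ → ℝ → ℝ → E) : ℝ → ℝ → ℝ → E := fun t a b => deriv (fun s => f s a b) t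

/-- Derivative `∂₁` with respect to `z¹`. -/
noncomputable def dz1 {E : Type*} [NormedAddCommGroup E] [NormedSpace ℝ E]
    (f : ℝ → ℝ → ℝ → E) : ℝ → ℝ → ℝ → E := fun t a b => deriv (fun s => f t s b) a

/-- Derivative `∂₂` with respect to `z²`. -/
noncomputable def dz2 {E : Type*} [NormedAddCommGroup E] [NormedSpace ℝ E]
    (f : ℝ → ℝ → ℝ → E) : ℝ → ℝ → ℝ → E := fun t a b => deriv (fun s => f t a s) b

theorem fderiv_fderiv_apply_comm {V W : Type*} [NormedAddCommGroup V] [NormedSpace ℝ V]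
    [NormedAddCommGroup W] [NormedSpace ℝ W] {F : V → W} {x : V} (hF : ContDiffAt ℝ 2 F x)
    (u v : V) :
    fderiv ℝ (fun y => fderiv ℝ F y v) x u = fderiv ℝ (fun y => fderiv ℝ F y u) x v := by
  have hF' : DifferentiableAt ℝ (fderiv ℝ F) x :=
    (hF.fderiv_right (m := 1) (by norm_num)).differentiableAt (by norm_num)
  have hsecond (a b : V) :
      fderiv ℝ (fun y => fderiv ℝ F y b) x a = fderiv ℝ (fderiv ℝ F) x a b := by
    simp [fderiv_clm_apply hF' (differentiableAt_const b)]
  rw [hsecond, hsecond]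
  exact (hF.isSymmSndFDerivAt (by simp)).eq u v

theorem hasDerivAt_intervalIntegral_of_continuous {E : Type*} [NormedAddCommGroup E]
    [NormedSpace ℝ E] {F F' : ℝ → ℝ → E} (hF : ∀ s, Continuous (F s))
    (hF' : Continuous (Function.uncurry F'))
    (hderiv : ∀ s a, HasDerivAt (fun r => F r a) (F' s a) s) (x y t : ℝ) :
    HasDerivAt (fun s => ∫ a in x..y, F s a) (∫ a in x..y, F' t a) t := by
  obtain ⟨C, hC⟩ := ((isCompact_closedBall t 1).prod
    (isCompact_uIcc (a := x) (b := y))).exists_bound_of_continuousOn hF'.continuousOn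
  refine (intervalIntegral.hasDerivAt_integral_of_dominated_loc_of_deriv_le
    (bound := fun _ => C) (Metric.ball_mem_nhds t one_pos)
    (.of_forall fun s => (hF s).aestronglyMeasurable) ((hF t).intervalIntegrable _ _)
    (hF'.uncurry_left t).aestronglyMeasurable ?_ intervalIntegrable_const
    (.of_forall fun a _ s _ => hderiv s a)).2
  exact .of_forall fun a ha s hs =>
    hC (s, a) ⟨Metric.ball_subset_closedBall hs, Set.uIoc_subset_uIcc ha⟩

/-- Joint smoothness of a time-dependent field `f(t,z¹,z²)` in all three variables. -/
def SmoothField {E : Type*} [NormedAddCommGroup E] [NormedSpace ℝ E] (f : ℝ → ℝ → ℝ → E) : Prop :=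
  ContDiff ℝ (⊤ : ℕ∞) (fun q : ℝ × ℝ × ℝ => f q.1 q.2.1 q.2.2)

namespace SmoothField

section Calculus

variable {E : Type*} [NormedAddCommGroup E] [NormedSpace ℝ E] {f g : ℝ → ℝ → ℝ → E}

theorem of_static {m : ℝ → ℝ → E} (hm : ContDiff ℝ (⊤ : ℕ∞) (fun q : ℝ × ℝ => m q.1 q.2)) :
    SmoothField (fun _ => m) :=
  hm.comp contDiff_snd

protected theorem add (hf : SmoothField f) (hg : SmoothField g) : SmoothField (f + g) :=
  ContDiff.add hf hg

protected theorem sub (hf : SmoothField f) (hg : SmoothField g) : SmoothField (f - g) :=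
  ContDiff.sub hf hg

protected theorem continuous (hf : SmoothField f) :
    Continuous (fun q : ℝ × ℝ × ℝ => f q.1 q.2.1 q.2.2) :=
  ContDiff.continuous hf

theorem continuous_space (hf : SmoothField f) (t : ℝ) : Continuous (Function.uncurry (f t)) :=
  hf.continuous.comp (f := fun q : ℝ × ℝ => (t, q)) (by fun_prop)

theorem continuous_fst (hf : SmoothField f) (t b : ℝ) : Continuous (fun a => f t a b) :=
  (hf.continuous_space t).uncurry_right b

theorem continuous_snd (hf : SmoothField f) (t a : ℝ) : Continuous (f t a) :=
  (hf.continuous_space t).uncurry_left a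

theorem continuous_integral_snd (hf : SmoothField f) (y₀ y₁ : ℝ) :
    Continuous (Function.uncurry fun t a => ∫ b in y₀..y₁, f t a b) :=
  intervalIntegral.continuous_parametric_intervalIntegral_of_continuous'
    (f := fun (p : ℝ × ℝ) b => f p.1 p.2 b)
    (hf.continuous.comp (f := fun q : (ℝ × ℝ) × ℝ => (q.1.1, q.1.2, q.2)) (by fun_prop)) _ _

theorem hasDerivAt_comp (hf : SmoothField f) {γ : ℝ → ℝ × ℝ × ℝ} {γ' : ℝ × ℝ × ℝ} {s : ℝ}
    (hγ : HasDerivAt γ γ' s) :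
    HasDerivAt (fun r => f (γ r).1 (γ r).2.1 (γ r).2.2)
      (fderiv ℝ (fun q : ℝ × ℝ × ℝ => f q.1 q.2.1 q.2.2) (γ s) γ') s :=
  ((ContDiff.differentiable hf (by simp)) (γ s)).hasFDerivAt.comp_hasDerivAt s hγ

theorem hasDerivAt_fderiv_time (hf : SmoothField f) (t a b : ℝ) :
    HasDerivAt (fun s => f s a b)
      (fderiv ℝ (fun q : ℝ × ℝ × ℝ => f q.1 q.2.1 q.2.2) (t, a, b) (1, 0, 0)) t :=
  hf.hasDerivAt_comp ((hasDerivAt_id t).prodMk (hasDerivAt_const t (a, b)))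

theorem hasDerivAt_fderiv_fst (hf : SmoothField f) (t a b : ℝ) :
    HasDerivAt (fun s => f t s b)
      (fderiv ℝ (fun q : ℝ × ℝ × ℝ => f q.1 q.2.1 q.2.2) (t, a, b) (0, 1, 0)) a :=
  hf.hasDerivAt_comp ((hasDerivAt_const a t).prodMk ((hasDerivAt_id a).prodMk
    (hasDerivAt_const a b)))

theorem hasDerivAt_fderiv_snd (hf : SmoothField f) (t a b : ℝ) :
    HasDerivAt (fun s => f t a s)
      (fderiv ℝ (fun q : ℝ × ℝ × ℝ => f q.1 q.2.1 q.2.2) (t, a, b) (0, 0, 1)) b :=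
  hf.hasDerivAt_comp ((hasDerivAt_const b t).prodMk ((hasDerivAt_const b a).prodMk
    (hasDerivAt_id b)))

theorem pt2_eq_fderiv (hf : SmoothField f) :
    pt2 f = fun t a b =>
      fderiv ℝ (fun q : ℝ × ℝ × ℝ => f q.1 q.2.1 q.2.2) (t, a, b) (1, 0, 0) := by
  funext t a b
  exact (hf.hasDerivAt_fderiv_time t a b).deriv

theorem dz1_eq_fderiv (hf : SmoothField f) :
    dz1 f = fun t a b =>
      fderiv ℝ (fun q : ℝ × ℝ × ℝ => f q.1 q.2.1 q.2.2) (t, a, b) (0, 1, 0) := by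
  funext t a b
  exact (hf.hasDerivAt_fderiv_fst t a b).deriv

theorem dz2_eq_fderiv (hf : SmoothField f) :
    dz2 f = fun t a b =>
      fderiv ℝ (fun q : ℝ × ℝ × ℝ => f q.1 q.2.1 q.2.2) (t, a, b) (0, 0, 1) := by
  funext t a b
  exact (hf.hasDerivAt_fderiv_snd t a b).deriv

theorem hasDerivAt_pt2 (hf : SmoothField f) (t a b : ℝ) :
    HasDerivAt (fun s => f s a b) (pt2 f t a b) t :=
  (hf.hasDerivAt_fderiv_time t a b).differentiableAt.hasDerivAt

theorem hasDerivAt_dz1 (hf : SmoothField f) (t a b : ℝ) :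
    HasDerivAt (fun s => f t s b) (dz1 f t a b) a :=
  (hf.hasDerivAt_fderiv_fst t a b).differentiableAt.hasDerivAt

theorem hasDerivAt_dz2 (hf : SmoothField f) (t a b : ℝ) :
    HasDerivAt (fun s => f t a s) (dz2 f t a b) b :=
  (hf.hasDerivAt_fderiv_snd t a b).differentiableAt.hasDerivAt

theorem fderiv_apply (hf : SmoothField f) (e : ℝ × ℝ × ℝ) :
    SmoothField (fun t a b => fderiv ℝ (fun q : ℝ × ℝ × ℝ => f q.1 q.2.1 q.2.2) (t, a, b) e) :=
  (ContDiff.fderiv_right (m := (⊤ : ℕ∞)) hf (by simp)).clm_apply contDiff_const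

protected theorem pt2 (hf : SmoothField f) : SmoothField (pt2 f) :=
  hf.pt2_eq_fderiv ▸ hf.fderiv_apply _

protected theorem dz1 (hf : SmoothField f) : SmoothField (dz1 f) :=
  hf.dz1_eq_fderiv ▸ hf.fderiv_apply _

protected theorem dz2 (hf : SmoothField f) : SmoothField (dz2 f) :=
  hf.dz2_eq_fderiv ▸ hf.fderiv_apply _

theorem fderiv_apply_comm (hf : SmoothField f) (q u v : ℝ × ℝ × ℝ) :
    fderiv ℝ (fun p => fderiv ℝ (fun q : ℝ × ℝ × ℝ => f q.1 q.2.1 q.2.2) p v) q u =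
      fderiv ℝ (fun p => fderiv ℝ (fun q : ℝ × ℝ × ℝ => f q.1 q.2.1 q.2.2) p u) q v :=
  fderiv_fderiv_apply_comm
    (ContDiff.of_le hf (by simpa using WithTop.coe_le_coe.2 (le_top : (2 : ℕ∞) ≤ ⊤))).contDiffAt u v

theorem pt2_dz1 (hf : SmoothField f) : pt2 (dz1 f) = dz1 (pt2 f) := by
  rw [hf.dz1.pt2_eq_fderiv, hf.pt2.dz1_eq_fderiv, hf.dz1_eq_fderiv, hf.pt2_eq_fderiv]
  exact funext₃ fun _ _ _ => hf.fderiv_apply_comm _ _ _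

theorem pt2_dz2 (hf : SmoothField f) : pt2 (dz2 f) = dz2 (pt2 f) := by
  rw [hf.dz2.pt2_eq_fderiv, hf.pt2.dz2_eq_fderiv, hf.dz2_eq_fderiv, hf.pt2_eq_fderiv]
  exact funext₃ fun _ _ _ => hf.fderiv_apply_comm _ _ _

theorem dz2_dz1 (hf : SmoothField f) : dz2 (dz1 f) = dz1 (dz2 f) := by
  rw [hf.dz1.dz2_eq_fderiv, hf.dz2.dz1_eq_fderiv, hf.dz1_eq_fderiv, hf.dz2_eq_fderiv]
  exact funext₃ fun _ _ _ => hf.fderiv_apply_comm _ _ _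

theorem dz1_add (hf : SmoothField f) (hg : SmoothField g) : dz1 (f + g) = dz1 f + dz1 g :=
  funext₃ fun t a b => ((hf.hasDerivAt_dz1 t a b).add (hg.hasDerivAt_dz1 t a b)).deriv

theorem dz2_add (hf : SmoothField f) (hg : SmoothField g) : dz2 (f + g) = dz2 f + dz2 g :=
  funext₃ fun t a b => ((hf.hasDerivAt_dz2 t a b).add (hg.hasDerivAt_dz2 t a b)).deriv

theorem dz1_sub (hf : SmoothField f) (hg : SmoothField g) : dz1 (f - g) = dz1 f - dz1 g :=
  funext₃ fun t a b => ((hf.hasDerivAt_dz1 t a b).sub (hg.hasDerivAt_dz1 t a b)).deriv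

theorem dz2_sub (hf : SmoothField f) (hg : SmoothField g) : dz2 (f - g) = dz2 f - dz2 g :=
  funext₃ fun t a b => ((hf.hasDerivAt_dz2 t a b).sub (hg.hasDerivAt_dz2 t a b)).deriv

theorem hasDerivAt_integral_integral (hf : SmoothField f) (x₀ x₁ y₀ y₁ t : ℝ) :
    HasDerivAt (fun s => ∫ a in x₀..x₁, ∫ b in y₀..y₁, f s a b)
      (∫ a in x₀..x₁, ∫ b in y₀..y₁, pt2 f t a b) t := by
  refine hasDerivAt_intervalIntegral_of_continuous
    (fun s => (hf.continuous_integral_snd y₀ y₁).uncurry_left s)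
    (hf.pt2.continuous_integral_snd y₀ y₁) (fun s a => ?_) x₀ x₁ t
  exact hasDerivAt_intervalIntegral_of_continuous (F' := fun r b => pt2 f r a b)
    (fun r => hf.continuous_snd r a)
    (hf.pt2.continuous.comp (f := fun q : ℝ × ℝ => (q.1, a, q.2)) (by fun_prop))
    (fun r b => hf.hasDerivAt_pt2 r a b) y₀ y₁ s

theorem integral_integral_add (hf : SmoothField f) (hg : SmoothField g) (t x₀ x₁ y₀ y₁ : ℝ) :
    ∫ a in x₀..x₁, ∫ b in y₀..y₁, (f + g) t a b =
      (∫ a in x₀..x₁, ∫ b in y₀..y₁, f t a b) + ∫ a in x₀..x₁, ∫ b in y₀..y₁, g t a b := by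
  rw [← intervalIntegral.integral_add
    (((hf.continuous_integral_snd y₀ y₁).uncurry_left t).intervalIntegrable _ _)
    (((hg.continuous_integral_snd y₀ y₁).uncurry_left t).intervalIntegrable _ _)]
  exact intervalIntegral.integral_congr fun a _ => intervalIntegral.integral_add
    ((hf.continuous_snd t a).intervalIntegrable _ _)
    ((hg.continuous_snd t a).intervalIntegrable _ _)

variable [CompleteSpace E]

theorem integral_dz1 (hf : SmoothField f) (t b x₀ x₁ : ℝ) :
    ∫ a in x₀..x₁, dz1 f t a b = f t x₁ b - f t x₀ b :=
  intervalIntegral.integral_eq_sub_of_hasDerivAt (fun a _ => hf.hasDerivAt_dz1 t a b)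
    ((hf.dz1.continuous_fst t b).intervalIntegrable _ _)

theorem integral_dz2 (hf : SmoothField f) (t a y₀ y₁ : ℝ) :
    ∫ b in y₀..y₁, dz2 f t a b = f t a y₁ - f t a y₀ :=
  intervalIntegral.integral_eq_sub_of_hasDerivAt (fun b _ => hf.hasDerivAt_dz2 t a b)
    ((hf.dz2.continuous_snd t a).intervalIntegrable _ _)

theorem integral_integral_dz1 (hf : SmoothField f) (t x₀ x₁ y₀ y₁ : ℝ) :
    ∫ a in x₀..x₁, ∫ b in y₀..y₁, dz1 f t a b = ∫ b in y₀..y₁, (f t x₁ b - f t x₀ b) := by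
  have hint : IntegrableOn (Function.uncurry (dz1 f t)) (Set.uIoc x₀ x₁ ×ˢ Set.uIoc y₀ y₁) :=
    ((hf.dz1.continuous_space t).continuousOn.integrableOn_compact
      (isCompact_uIcc.prod isCompact_uIcc)).mono_set
      (Set.prod_mono Set.uIoc_subset_uIcc Set.uIoc_subset_uIcc)
  rw [intervalIntegral_intervalIntegral_swap hint]
  simp only [hf.integral_dz1]

theorem integral_integral_dz2 (hf : SmoothField f) (t x₀ x₁ y₀ y₁ : ℝ) :
    ∫ a in x₀..x₁, ∫ b in y₀..y₁, dz2 f t a b = ∫ a in x₀..x₁, (f t a y₁ - f t a y₀) := by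
  simp only [hf.integral_dz2]

theorem integral_integral_dz1_dz2 (hf : SmoothField f) (t x₀ x₁ y₀ y₁ : ℝ) :
    ∫ a in x₀..x₁, ∫ b in y₀..y₁, dz1 (dz2 f) t a b =
      (f t x₁ y₁ - f t x₁ y₀) - (f t x₀ y₁ - f t x₀ y₀) := by
  rw [hf.dz2.integral_integral_dz1, intervalIntegral.integral_sub
    ((hf.dz2.continuous_snd t x₁).intervalIntegrable _ _)
    ((hf.dz2.continuous_snd t x₀).intervalIntegrable _ _), hf.integral_dz2, hf.integral_dz2]

end Calculus

section Real

variable {f g : ℝ → ℝ → ℝ → ℝ}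

protected theorem mul (hf : SmoothField f) (hg : SmoothField g) : SmoothField (f * g) :=
  ContDiff.mul hf hg

theorem dz1_mul (hf : SmoothField f) (hg : SmoothField g) : dz1 (f * g) = dz1 f * g + f * dz1 g :=
  funext₃ fun t a b => ((hf.hasDerivAt_dz1 t a b).mul (hg.hasDerivAt_dz1 t a b)).deriv

theorem dz2_mul (hf : SmoothField f) (hg : SmoothField g) : dz2 (f * g) = dz2 f * g + f * dz2 g :=
  funext₃ fun t a b => ((hf.hasDerivAt_dz2 t a b).mul (hg.hasDerivAt_dz2 t a b)).deriv

theorem dz1_dz2_mul (hf : SmoothField f) (hg : SmoothField g) :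
    dz1 (dz2 (f * g)) = dz1 (dz2 f) * g + dz2 f * dz1 g + dz1 f * dz2 g + f * dz1 (dz2 g) := by
  rw [hf.dz2_mul hg, SmoothField.dz1_add (hf.dz2.mul hg) (hf.mul hg.dz2), hf.dz2.dz1_mul hg,
    hf.dz1_mul hg.dz2]
  ring

end Real

end SmoothField

section PlateGreen

variable {M₁ M₂ M₁₂ v : ℝ → ℝ → ℝ → ℝ}

/-- The double divergence `∂₁²M₁ + ∂₂²M₂ + 2∂₁∂₂M₁₂` of the symmetric moment tensor with diagonal
entries `M₁`, `M₂` and off-diagonal entry `M₁₂`. -/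
noncomputable def divDivMoment (M₁ M₂ M₁₂ : ℝ → ℝ → ℝ → ℝ) : ℝ → ℝ → ℝ → ℝ :=
  dz1 (dz1 M₁) + dz2 (dz2 M₂) + 2 * dz1 (dz2 M₁₂)

/-- The contraction of the symmetric moment tensor `(M₁, M₂, M₁₂)` with the Hessian of `v`: the
power that the moments expend on the velocity field `v`, per unit area. -/
noncomputable def momentHessian (M₁ M₂ M₁₂ v : ℝ → ℝ → ℝ → ℝ) : ℝ → ℝ → ℝ → ℝ :=
  M₁ * dz1 (dz1 v) + M₂ * dz2 (dz2 v) + 2 * (M₁₂ * dz1 (dz2 v))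

/-- Kirchhoff's effective shear force on an edge `z¹ = const`: the shear force `∂₁M₁ + ∂₂M₁₂`
together with the derivative `∂₂M₁₂` of the twisting moment along the edge. -/
noncomputable def effectiveShear₁ (M₁ M₁₂ : ℝ → ℝ → ℝ → ℝ) : ℝ → ℝ → ℝ → ℝ :=
  dz1 M₁ + 2 * dz2 M₁₂

/-- Kirchhoff's effective shear force on an edge `z² = const`. -/
noncomputable def effectiveShear₂ (M₂ M₁₂ : ℝ → ℝ → ℝ → ℝ) : ℝ → ℝ → ℝ → ℝ :=
  dz2 M₂ + 2 * dz1 M₁₂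

/-- The power flux through an edge `z¹ = const`: the work of the bending moment on the rotation
`∂₁v` minus that of the effective shear force on `v`. -/
noncomputable def edgeFlux₁ (M₁ M₁₂ v : ℝ → ℝ → ℝ → ℝ) : ℝ → ℝ → ℝ → ℝ :=
  M₁ * dz1 v - effectiveShear₁ M₁ M₁₂ * v

/-- The power flux through an edge `z² = const`. -/
noncomputable def edgeFlux₂ (M₂ M₁₂ v : ℝ → ℝ → ℝ → ℝ) : ℝ → ℝ → ℝ → ℝ :=
  M₂ * dz2 v - effectiveShear₂ M₂ M₁₂ * v

namespace SmoothField

protected theorem two_mul {f : ℝ → ℝ → ℝ → ℝ} (hf : SmoothField f) : SmoothField (2 * f) :=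
  (_root_.two_mul f).symm ▸ hf.add hf

protected theorem divDivMoment (hM₁ : SmoothField M₁) (hM₂ : SmoothField M₂)
    (hM₁₂ : SmoothField M₁₂) : SmoothField (divDivMoment M₁ M₂ M₁₂) :=
  (hM₁.dz1.dz1.add hM₂.dz2.dz2).add hM₁₂.dz2.dz1.two_mul

protected theorem momentHessian (hM₁ : SmoothField M₁) (hM₂ : SmoothField M₂)
    (hM₁₂ : SmoothField M₁₂) (hv : SmoothField v) : SmoothField (momentHessian M₁ M₂ M₁₂ v) :=
  ((hM₁.mul hv.dz1.dz1).add (hM₂.mul hv.dz2.dz2)).add (hM₁₂.mul hv.dz2.dz1).two_mul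

protected theorem effectiveShear₁ (hM₁ : SmoothField M₁) (hM₁₂ : SmoothField M₁₂) :
    SmoothField (effectiveShear₁ M₁ M₁₂) :=
  hM₁.dz1.add hM₁₂.dz2.two_mul

protected theorem effectiveShear₂ (hM₂ : SmoothField M₂) (hM₁₂ : SmoothField M₁₂) :
    SmoothField (effectiveShear₂ M₂ M₁₂) :=
  hM₂.dz2.add hM₁₂.dz1.two_mul

protected theorem edgeFlux₁ (hM₁ : SmoothField M₁) (hM₁₂ : SmoothField M₁₂)
    (hv : SmoothField v) : SmoothField (edgeFlux₁ M₁ M₁₂ v) :=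
  (hM₁.mul hv.dz1).sub ((hM₁.effectiveShear₁ hM₁₂).mul hv)

protected theorem edgeFlux₂ (hM₂ : SmoothField M₂) (hM₁₂ : SmoothField M₁₂)
    (hv : SmoothField v) : SmoothField (edgeFlux₂ M₂ M₁₂ v) :=
  (hM₂.mul hv.dz2).sub ((hM₂.effectiveShear₂ hM₁₂).mul hv)

end SmoothField

theorem dz1_edgeFlux₁ (hM₁ : SmoothField M₁) (hM₁₂ : SmoothField M₁₂) (hv : SmoothField v) :
    dz1 (edgeFlux₁ M₁ M₁₂ v) = M₁ * dz1 (dz1 v) + dz1 M₁ * dz1 v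
      - (dz1 (dz1 M₁) + 2 * dz1 (dz2 M₁₂)) * v - (dz1 M₁ + 2 * dz2 M₁₂) * dz1 v := by
  rw [edgeFlux₁, SmoothField.dz1_sub (hM₁.mul hv.dz1) ((hM₁.effectiveShear₁ hM₁₂).mul hv),
    hM₁.dz1_mul hv.dz1, (hM₁.effectiveShear₁ hM₁₂).dz1_mul hv, effectiveShear₁, two_mul,
    hM₁.dz1.dz1_add (hM₁₂.dz2.add hM₁₂.dz2), hM₁₂.dz2.dz1_add hM₁₂.dz2]
  ring

theorem dz2_edgeFlux₂ (hM₂ : SmoothField M₂) (hM₁₂ : SmoothField M₁₂) (hv : SmoothField v) :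
    dz2 (edgeFlux₂ M₂ M₁₂ v) = M₂ * dz2 (dz2 v) + dz2 M₂ * dz2 v
      - (dz2 (dz2 M₂) + 2 * dz1 (dz2 M₁₂)) * v - (dz2 M₂ + 2 * dz1 M₁₂) * dz2 v := by
  rw [edgeFlux₂, SmoothField.dz2_sub (hM₂.mul hv.dz2) ((hM₂.effectiveShear₂ hM₁₂).mul hv),
    hM₂.dz2_mul hv.dz2, (hM₂.effectiveShear₂ hM₁₂).dz2_mul hv, effectiveShear₂, two_mul,
    hM₂.dz2.dz2_add (hM₁₂.dz1.add hM₁₂.dz1), hM₁₂.dz1.dz2_add hM₁₂.dz1, hM₁₂.dz2_dz1]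
  ring

theorem momentHessian_eq_divDivMoment_mul_add (hM₁ : SmoothField M₁) (hM₂ : SmoothField M₂)
    (hM₁₂ : SmoothField M₁₂) (hv : SmoothField v) :
    momentHessian M₁ M₂ M₁₂ v = divDivMoment M₁ M₂ M₁₂ * v + dz1 (edgeFlux₁ M₁ M₁₂ v)
      + dz2 (edgeFlux₂ M₂ M₁₂ v) + 2 * dz1 (dz2 (M₁₂ * v)) := by
  rw [momentHessian, divDivMoment, dz1_edgeFlux₁ hM₁ hM₁₂ hv, dz2_edgeFlux₂ hM₂ hM₁₂ hv,
    hM₁₂.dz1_dz2_mul hv]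
  ring

theorem integral_momentHessian (hM₁ : SmoothField M₁) (hM₂ : SmoothField M₂)
    (hM₁₂ : SmoothField M₁₂) (hv : SmoothField v) (t x₀ x₁ y₀ y₁ : ℝ) :
    ∫ a in x₀..x₁, ∫ b in y₀..y₁, momentHessian M₁ M₂ M₁₂ v t a b =
      (∫ a in x₀..x₁, ∫ b in y₀..y₁, divDivMoment M₁ M₂ M₁₂ t a b * v t a b)
        + (∫ b in y₀..y₁, (edgeFlux₁ M₁ M₁₂ v t x₁ b - edgeFlux₁ M₁ M₁₂ v t x₀ b))
        + (∫ a in x₀..x₁, (edgeFlux₂ M₂ M₁₂ v t a y₁ - edgeFlux₂ M₂ M₁₂ v t a y₀))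
        + 2 * ((M₁₂ t x₁ y₁ * v t x₁ y₁ - M₁₂ t x₁ y₀ * v t x₁ y₀)
          - (M₁₂ t x₀ y₁ * v t x₀ y₁ - M₁₂ t x₀ y₀ * v t x₀ y₀)) := by
  have hflux₁ := hM₁.edgeFlux₁ hM₁₂ hv
  have hflux₂ := hM₂.edgeFlux₂ hM₁₂ hv
  have hwork := (hM₁.divDivMoment hM₂ hM₁₂).mul hv
  have htwist := (hM₁₂.mul hv).dz2.dz1
  have hcorners := (hM₁₂.mul hv).integral_integral_dz1_dz2 t x₀ x₁ y₀ y₁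
  simp only [Pi.mul_apply] at hcorners
  rw [momentHessian_eq_divDivMoment_mul_add hM₁ hM₂ hM₁₂ hv,
    ((hwork.add hflux₁.dz1).add hflux₂.dz2).integral_integral_add htwist.two_mul,
    (hwork.add hflux₁.dz1).integral_integral_add hflux₂.dz2,
    hwork.integral_integral_add hflux₁.dz1, hflux₁.integral_integral_dz1,
    hflux₂.integral_integral_dz2, ← hcorners]
  simp only [Pi.mul_apply, Pi.ofNat_apply, intervalIntegral.integral_const_mul]

theorem integral_momentHessian_of_clamped_of_free (hM₁ : SmoothField M₁) (hM₂ : SmoothField M₂)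
    (hM₁₂ : SmoothField M₁₂) (hv : SmoothField v) {t x₀ x₁ y₀ y₁ : ℝ}
    (hclamped : ∀ b ∈ Set.uIcc y₀ y₁, v t x₀ b = 0 ∧ dz1 v t x₀ b = 0)
    (hfree₁ : ∀ b ∈ Set.uIcc y₀ y₁, M₁ t x₁ b = 0 ∧ effectiveShear₁ M₁ M₁₂ t x₁ b = 0)
    (hfree₂ : ∀ a ∈ Set.uIcc x₀ x₁, ∀ b ∈ ({y₀, y₁} : Set ℝ),
      M₂ t a b = 0 ∧ effectiveShear₂ M₂ M₁₂ t a b = 0)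
    (hcorner : M₁₂ t x₁ y₀ = 0 ∧ M₁₂ t x₁ y₁ = 0) :
    ∫ a in x₀..x₁, ∫ b in y₀..y₁, momentHessian M₁ M₂ M₁₂ v t a b =
      ∫ a in x₀..x₁, ∫ b in y₀..y₁, divDivMoment M₁ M₂ M₁₂ t a b * v t a b := by
  have hedge₁ : ∫ b in y₀..y₁, (edgeFlux₁ M₁ M₁₂ v t x₁ b - edgeFlux₁ M₁ M₁₂ v t x₀ b) = 0 :=
    intervalIntegral.integral_zero_ae <| .of_forall fun b hb => by
      have hb' := Set.uIoc_subset_uIcc hb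
      simp [edgeFlux₁, hclamped b hb', hfree₁ b hb']
  have hedge₂ : ∫ a in x₀..x₁, (edgeFlux₂ M₂ M₁₂ v t a y₁ - edgeFlux₂ M₂ M₁₂ v t a y₀) = 0 :=
    intervalIntegral.integral_zero_ae <| .of_forall fun a ha => by
      have ha' := Set.uIoc_subset_uIcc ha
      simp [edgeFlux₂, hfree₂ a ha' y₀, hfree₂ a ha' y₁]
  rw [integral_momentHessian hM₁ hM₂ hM₁₂ hv, hedge₁, hedge₂, hcorner.1, hcorner.2,
    (hclamped y₀ Set.left_mem_uIcc).1, (hclamped y₁ Set.right_mem_uIcc).1]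
  ring

end PlateGreen

section KirchhoffLove

variable {μ Ξ : ℝ → ℝ → ℝ} {ν : ℝ} {w : ℝ → ℝ → ℝ → ℝ}

/-- The bending moment `Ξ(w_{[20]} + νw_{[02]})` of a Kirchhoff–Love plate, conjugate to the
curvature `w_{[20]}`. -/
noncomputable def bendingMoment₁ (Ξ : ℝ → ℝ → ℝ) (ν : ℝ) (w : ℝ → ℝ → ℝ → ℝ) : ℝ → ℝ → ℝ → ℝ :=
  fun t a b => Ξ a b * (dz1 (dz1 w) t a b + ν * dz2 (dz2 w) t a b)

/-- The bending moment `Ξ(νw_{[20]} + w_{[02]})` of a Kirchhoff–Love plate, conjugate to the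
curvature `w_{[02]}`. -/
noncomputable def bendingMoment₂ (Ξ : ℝ → ℝ → ℝ) (ν : ℝ) (w : ℝ → ℝ → ℝ → ℝ) : ℝ → ℝ → ℝ → ℝ :=
  fun t a b => Ξ a b * (ν * dz1 (dz1 w) t a b + dz2 (dz2 w) t a b)

/-- The twisting moment `Ξ(1-ν)w_{[11]}` of a Kirchhoff–Love plate. It enters the power
twice, once for each off-diagonal entry of the Hessian. -/
noncomputable def twistingMoment (Ξ : ℝ → ℝ → ℝ) (ν : ℝ) (w : ℝ → ℝ → ℝ → ℝ) : ℝ → ℝ → ℝ → ℝ :=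
  fun t a b => Ξ a b * (1 - ν) * dz1 (dz2 w) t a b

/-- The energy per unit area of a Kirchhoff–Love plate: kinetic energy plus bending energy. -/
noncomputable def plateEnergyDensity (μ Ξ : ℝ → ℝ → ℝ) (ν : ℝ) (w : ℝ → ℝ → ℝ → ℝ) :
    ℝ → ℝ → ℝ → ℝ :=
  fun t a b => μ a b / 2 * (pt2 w t a b) ^ 2
    + Ξ a b / 2 * ((dz1 (dz1 w) t a b) ^ 2 + (dz2 (dz2 w) t a b) ^ 2
      + 2 * ν * dz1 (dz1 w) t a b * dz2 (dz2 w) t a b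
      + 2 * (1 - ν) * (dz1 (dz2 w) t a b) ^ 2)

namespace SmoothField

protected theorem bendingMoment₁ (hΞ : SmoothField fun _ => Ξ) (hw : SmoothField w) :
    SmoothField (bendingMoment₁ Ξ ν w) :=
  hΞ.mul (hw.dz1.dz1.add (ContDiff.mul contDiff_const hw.dz2.dz2))

protected theorem bendingMoment₂ (hΞ : SmoothField fun _ => Ξ) (hw : SmoothField w) :
    SmoothField (bendingMoment₂ Ξ ν w) :=
  hΞ.mul (SmoothField.add (ContDiff.mul contDiff_const hw.dz1.dz1) hw.dz2.dz2)

protected theorem twistingMoment (hΞ : SmoothField fun _ => Ξ) (hw : SmoothField w) :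
    SmoothField (twistingMoment Ξ ν w) :=
  SmoothField.mul (ContDiff.mul hΞ contDiff_const) hw.dz2.dz1

protected theorem plateEnergyDensity (hμ : SmoothField fun _ => μ) (hΞ : SmoothField fun _ => Ξ)
    (hw : SmoothField w) : SmoothField (plateEnergyDensity μ Ξ ν w) := by
  have hkinetic := ContDiff.mul (ContDiff.div_const hμ 2) (ContDiff.pow hw.pt2 2)
  have hsquares := ContDiff.add (ContDiff.pow hw.dz1.dz1 2) (ContDiff.pow hw.dz2.dz2 2)
  have hcoupling := (contDiff_const (c := 2 * ν)).mul hw.dz1.dz1 |>.mul hw.dz2.dz2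
  have htwisting := (contDiff_const (c := 2 * (1 - ν))).mul (ContDiff.pow hw.dz2.dz1 2)
  exact hkinetic.add ((ContDiff.div_const hΞ 2).mul ((hsquares.add hcoupling).add htwisting))

end SmoothField

theorem pt2_plateEnergyDensity (hw : SmoothField w) (t a b : ℝ) :
    pt2 (plateEnergyDensity μ Ξ ν w) t a b = μ a b * pt2 (pt2 w) t a b * pt2 w t a b
      + momentHessian (bendingMoment₁ Ξ ν w) (bendingMoment₂ Ξ ν w) (twistingMoment Ξ ν w)
          (pt2 w) t a b := by
  have hvel := hw.pt2.hasDerivAt_pt2 t a b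
  have hw₂₀ := hw.dz1.dz1.hasDerivAt_pt2 t a b
  have hw₀₂ := hw.dz2.dz2.hasDerivAt_pt2 t a b
  have hw₁₁ := hw.dz2.dz1.hasDerivAt_pt2 t a b
  rw [hw.dz1.pt2_dz1, hw.pt2_dz1] at hw₂₀
  rw [hw.dz2.pt2_dz2, hw.pt2_dz2] at hw₀₂
  rw [hw.dz2.pt2_dz1, hw.pt2_dz2] at hw₁₁
  have hkinetic := (hvel.pow 2).const_mul (μ a b / 2)
  have hbending := ((((hw₂₀.pow 2).add (hw₀₂.pow 2)).add ((hw₂₀.const_mul (2 * ν)).mul hw₀₂)).add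
    ((hw₁₁.pow 2).const_mul (2 * (1 - ν)))).const_mul (Ξ a b / 2)
  refine (hkinetic.add hbending).deriv.trans ?_
  simp only [momentHessian, bendingMoment₁, bendingMoment₂, twistingMoment, Pi.add_apply,
    Pi.mul_apply, Pi.ofNat_apply]
  push_cast
  ring

theorem effectiveShear₁_eq_of_deriv_eq_zero (hΞ : SmoothField fun _ => Ξ) (hw : SmoothField w)
    {t a b : ℝ} (hgrad : deriv (fun s => Ξ s b) a = 0 ∧ deriv (fun s => Ξ a s) b = 0) :
    effectiveShear₁ (bendingMoment₁ Ξ ν w) (twistingMoment Ξ ν w) t a b =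
      Ξ a b * (dz1 (dz1 (dz1 w)) t a b + (2 - ν) * dz1 (dz2 (dz2 w)) t a b) := by
  have hΞ₁ : HasDerivAt (fun s => Ξ s b) 0 a := hgrad.1 ▸ hΞ.hasDerivAt_dz1 t a b
  have hΞ₂ : HasDerivAt (fun s => Ξ a s) 0 b := hgrad.2 ▸ hΞ.hasDerivAt_dz2 t a b
  have hbending : dz1 (bendingMoment₁ Ξ ν w) t a b = _ :=
    (hΞ₁.mul ((hw.dz1.dz1.hasDerivAt_dz1 t a b).add
      ((hw.dz2.dz2.hasDerivAt_dz1 t a b).const_mul ν))).deriv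
  have htwisting : dz2 (twistingMoment Ξ ν w) t a b = _ :=
    ((hΞ₂.mul_const (1 - ν)).mul (hw.dz2.dz1.hasDerivAt_dz2 t a b)).deriv
  simp only [effectiveShear₁, Pi.add_apply, Pi.mul_apply, Pi.ofNat_apply, hbending, htwisting,
    hw.dz2.dz2_dz1]
  ring

theorem effectiveShear₂_eq_of_deriv_eq_zero (hΞ : SmoothField fun _ => Ξ) (hw : SmoothField w)
    {t a b : ℝ} (hgrad : deriv (fun s => Ξ s b) a = 0 ∧ deriv (fun s => Ξ a s) b = 0) :
    effectiveShear₂ (bendingMoment₂ Ξ ν w) (twistingMoment Ξ ν w) t a b =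
      Ξ a b * (dz2 (dz2 (dz2 w)) t a b + (2 - ν) * dz1 (dz1 (dz2 w)) t a b) := by
  have hΞ₁ : HasDerivAt (fun s => Ξ s b) 0 a := hgrad.1 ▸ hΞ.hasDerivAt_dz1 t a b
  have hΞ₂ : HasDerivAt (fun s => Ξ a s) 0 b := hgrad.2 ▸ hΞ.hasDerivAt_dz2 t a b
  have hbending : dz2 (bendingMoment₂ Ξ ν w) t a b = _ :=
    (hΞ₂.mul (((hw.dz1.dz1.hasDerivAt_dz2 t a b).const_mul ν).add
      (hw.dz2.dz2.hasDerivAt_dz2 t a b))).deriv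
  have htwisting : dz1 (twistingMoment Ξ ν w) t a b = _ :=
    ((hΞ₁.mul_const (1 - ν)).mul (hw.dz2.dz1.hasDerivAt_dz1 t a b)).deriv
  simp only [effectiveShear₂, Pi.add_apply, Pi.mul_apply, Pi.ofNat_apply, hbending, htwisting,
    hw.dz1.dz2_dz1, hw.dz2_dz1]
  ring

theorem bendingMoment₁_effectiveShear₁_eq_zero (hΞ : SmoothField fun _ => Ξ) (hw : SmoothField w)
    {t a b : ℝ} (hgrad : deriv (fun s => Ξ s b) a = 0 ∧ deriv (fun s => Ξ a s) b = 0)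
    (hfree : dz1 (dz1 w) t a b + ν * dz2 (dz2 w) t a b = 0
      ∧ dz1 (dz1 (dz1 w)) t a b + (2 - ν) * dz1 (dz2 (dz2 w)) t a b = 0) :
    bendingMoment₁ Ξ ν w t a b = 0
      ∧ effectiveShear₁ (bendingMoment₁ Ξ ν w) (twistingMoment Ξ ν w) t a b = 0 := by
  rw [bendingMoment₁, effectiveShear₁_eq_of_deriv_eq_zero hΞ hw hgrad, hfree.1, hfree.2]
  simp only [mul_zero, and_self]

theorem bendingMoment₂_effectiveShear₂_eq_zero (hΞ : SmoothField fun _ => Ξ) (hw : SmoothField w)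
    {t a b : ℝ} (hgrad : deriv (fun s => Ξ s b) a = 0 ∧ deriv (fun s => Ξ a s) b = 0)
    (hfree : dz2 (dz2 w) t a b + ν * dz1 (dz1 w) t a b = 0
      ∧ dz2 (dz2 (dz2 w)) t a b + (2 - ν) * dz1 (dz1 (dz2 w)) t a b = 0) :
    bendingMoment₂ Ξ ν w t a b = 0
      ∧ effectiveShear₂ (bendingMoment₂ Ξ ν w) (twistingMoment Ξ ν w) t a b = 0 := by
  rw [bendingMoment₂, effectiveShear₂_eq_of_deriv_eq_zero hΞ hw hgrad, add_comm (ν * _), hfree.1,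
    hfree.2]
  simp only [mul_zero, and_self]

theorem pt2_eq_zero_and_dz1_pt2_eq_zero (hw : SmoothField w) {a b : ℝ}
    (hclamped : ∀ s, w s a b = 0 ∧ dz1 w s a b = 0) (t : ℝ) :
    pt2 w t a b = 0 ∧ dz1 (pt2 w) t a b = 0 := by
  rw [← hw.pt2_dz1]
  simp only [pt2, hclamped, deriv_const, and_self]

theorem statement9_general {L1 L2 : ℝ} (hL1 : 0 ≤ L1) (hL2 : 0 ≤ L2)
    (hμ : SmoothField fun _ => μ) (hΞ : SmoothField fun _ => Ξ) (hw : SmoothField w)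
    {q : ℝ → ℝ → ℝ} {t : ℝ}
    (hpde : ∀ a ∈ Set.Icc 0 L1, ∀ b ∈ Set.Icc 0 L2,
      μ a b * pt2 (pt2 w) t a b =
        -dz1 (dz1 (bendingMoment₁ Ξ ν w)) t a b - dz2 (dz2 (bendingMoment₂ Ξ ν w)) t a b
          - 2 * dz1 (dz2 (twistingMoment Ξ ν w)) t a b + q a b)
    (hclamped : ∀ b ∈ Set.Icc 0 L2, pt2 w t 0 b = 0 ∧ dz1 (pt2 w) t 0 b = 0)
    (hfree₁ : ∀ b ∈ Set.Icc 0 L2, bendingMoment₁ Ξ ν w t L1 b = 0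
      ∧ effectiveShear₁ (bendingMoment₁ Ξ ν w) (twistingMoment Ξ ν w) t L1 b = 0)
    (hfree₂ : ∀ a ∈ Set.Icc 0 L1, ∀ b ∈ ({0, L2} : Set ℝ), bendingMoment₂ Ξ ν w t a b = 0
      ∧ effectiveShear₂ (bendingMoment₂ Ξ ν w) (twistingMoment Ξ ν w) t a b = 0)
    (hcorner : twistingMoment Ξ ν w t L1 0 = 0 ∧ twistingMoment Ξ ν w t L1 L2 = 0) :
    HasDerivAt (fun τ => ∫ a in (0 : ℝ)..L1, ∫ b in (0 : ℝ)..L2, plateEnergyDensity μ Ξ ν w τ a b)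
      (∫ a in (0 : ℝ)..L1, ∫ b in (0 : ℝ)..L2, q a b * pt2 w t a b) t := by
  rw [← Set.uIcc_of_le hL1] at hpde hfree₂
  rw [← Set.uIcc_of_le hL2] at hpde hclamped hfree₁
  have hM₁ := hΞ.bendingMoment₁ (ν := ν) hw
  have hM₂ := hΞ.bendingMoment₂ (ν := ν) hw
  have hM₁₂ := hΞ.twistingMoment (ν := ν) hw
  have hinertia := (hμ.mul hw.pt2.pt2).mul hw.pt2
  have hwork := (hM₁.divDivMoment hM₂ hM₁₂).mul hw.pt2
  refine ((hμ.plateEnergyDensity hΞ hw).hasDerivAt_integral_integral 0 L1 0 L2 t).congr_deriv ?_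
  have hpower : pt2 (plateEnergyDensity μ Ξ ν w) = (fun _ => μ) * pt2 (pt2 w) * pt2 w
      + momentHessian (bendingMoment₁ Ξ ν w) (bendingMoment₂ Ξ ν w) (twistingMoment Ξ ν w)
          (pt2 w) :=
    funext₃ (pt2_plateEnergyDensity hw)
  rw [hpower, hinertia.integral_integral_add (hM₁.momentHessian hM₂ hM₁₂ hw.pt2),
    integral_momentHessian_of_clamped_of_free hM₁ hM₂ hM₁₂ hw.pt2 hclamped hfree₁ hfree₂ hcorner]
  refine (hinertia.integral_integral_add hwork ..).symm.trans ?_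
  refine intervalIntegral.integral_congr fun a ha => intervalIntegral.integral_congr fun b hb => ?_
  simp only [divDivMoment, Pi.add_apply, Pi.mul_apply, Pi.ofNat_apply]
  linear_combination pt2 w t a b * hpde a ha b hb

end KirchhoffLove

/-- power balance of the piezo-actuated Kirchhoff–Love plate,
clamped at the edge `z¹ = 0` and free at the remaining edges. -/
theorem statement9 (L1 L2 : ℝ) (hL1 : 0 < L1) (hL2 : 0 < L2)
    (μ Ξ : ℝ → ℝ → ℝ)
    (hμ : ContDiff ℝ (⊤ : ℕ∞) (fun q : ℝ × ℝ => μ q.1 q.2))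
    (hΞ : ContDiff ℝ (⊤ : ℕ∞) (fun q : ℝ × ℝ => Ξ q.1 q.2))
    (hμpos : ∀ a ∈ Set.Icc (0:ℝ) L1, ∀ b ∈ Set.Icc (0:ℝ) L2, 0 < μ a b)
    (hΞpos : ∀ a ∈ Set.Icc (0:ℝ) L1, ∀ b ∈ Set.Icc (0:ℝ) L2, 0 < Ξ a b)
    -- `∂₁Ξ = ∂₂Ξ = 0` on the boundary of `B`
    (hΞbd : ∀ a b : ℝ,
      (((a = 0 ∨ a = L1) ∧ b ∈ Set.Icc (0:ℝ) L2)
        ∨ (a ∈ Set.Icc (0:ℝ) L1 ∧ (b = 0 ∨ b = L2))) →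
      deriv (fun s => Ξ s b) a = 0 ∧ deriv (fun s => Ξ a s) b = 0)
    (ν : ℝ)
    (g21 g22 : ℝ → ℝ → ℝ)
    (hg21 : ContDiff ℝ (⊤ : ℕ∞) (fun q : ℝ × ℝ => g21 q.1 q.2))
    (hg22 : ContDiff ℝ (⊤ : ℕ∞) (fun q : ℝ × ℝ => g22 q.1 q.2))
    (u1 u2 : ℝ → ℝ)
    (w : ℝ → ℝ → ℝ → ℝ)
    (hw : ContDiff ℝ (⊤ : ℕ∞) (fun q : ℝ × ℝ × ℝ => w q.1 q.2.1 q.2.2))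
    -- the plate equation of motion on `B`
    (hpde : ∀ t : ℝ, ∀ a ∈ Set.Icc (0:ℝ) L1, ∀ b ∈ Set.Icc (0:ℝ) L2,
      μ a b * pt2 (pt2 w) t a b =
        -dz1 (dz1 (fun t a b => Ξ a b * (dz1 (dz1 w) t a b + ν * dz2 (dz2 w) t a b))) t a b
          - dz2 (dz2 (fun t a b => Ξ a b * (ν * dz1 (dz1 w) t a b + dz2 (dz2 w) t a b))) t a b
          - 2 * dz1 (dz2 (fun t a b => Ξ a b * (1 - ν) * dz1 (dz2 w) t a b)) t a b
          + g21 a b * u1 t + g22 a b * u2 t)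
    -- clamped on the edge `z¹ = 0`
    (hclamped : ∀ t : ℝ, ∀ b ∈ Set.Icc (0:ℝ) L2,
      w t 0 b = 0 ∧ dz1 w t 0 b = 0)
    -- free-edge conditions on the edge `z¹ = L1`
    (hfree1 : ∀ t : ℝ, ∀ b ∈ Set.Icc (0:ℝ) L2,
      dz1 (dz1 w) t L1 b + ν * dz2 (dz2 w) t L1 b = 0
      ∧ dz1 (dz1 (dz1 w)) t L1 b + (2 - ν) * dz1 (dz2 (dz2 w)) t L1 b = 0)
    -- free-edge conditions on the edges `z² = 0` and `z² = L2`
    (hfree2 : ∀ t : ℝ, ∀ a ∈ Set.Icc (0:ℝ) L1, ∀ b ∈ ({0, L2} : Set ℝ),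
      dz2 (dz2 w) t a b + ν * dz1 (dz1 w) t a b = 0
      ∧ dz2 (dz2 (dz2 w)) t a b + (2 - ν) * dz1 (dz1 (dz2 w)) t a b = 0)
    -- corner conditions at the free corners
    (hcorner : ∀ t : ℝ, dz1 (dz2 w) t L1 0 = 0 ∧ dz1 (dz2 w) t L1 L2 = 0)
    (t : ℝ) :
    HasDerivAt
      (fun τ => ∫ a in (0:ℝ)..L1, ∫ b in (0:ℝ)..L2,
        (μ a b / 2 * (pt2 w τ a b) ^ 2
          + Ξ a b / 2 * ((dz1 (dz1 w) τ a b) ^ 2 + (dz2 (dz2 w) τ a b) ^ 2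
              + 2 * ν * dz1 (dz1 w) τ a b * dz2 (dz2 w) τ a b
              + 2 * (1 - ν) * (dz1 (dz2 w) τ a b) ^ 2)))
      (∫ a in (0:ℝ)..L1, ∫ b in (0:ℝ)..L2,
        (g21 a b * pt2 w t a b * u1 t + g22 a b * pt2 w t a b * u2 t)) t := by
  have hΞ' := SmoothField.of_static hΞ
  refine (statement9_general hL1.le hL2.le (.of_static hμ) hΞ' hw
    (fun a ha b hb => (hpde t a ha b hb).trans (add_assoc ..))
    (fun b hb => pt2_eq_zero_and_dz1_pt2_eq_zero hw (hclamped · b hb) t)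
    (fun b hb => bendingMoment₁_effectiveShear₁_eq_zero hΞ' hw
      (hΞbd L1 b (.inl ⟨.inr rfl, hb⟩)) (hfree1 t b hb))
    (fun a ha b hb => bendingMoment₂_effectiveShear₂_eq_zero hΞ' hw
      (hΞbd a b (.inr ⟨ha, hb⟩)) (hfree2 t a ha b hb))
    ⟨by rw [twistingMoment, (hcorner t).1, mul_zero],
      by rw [twistingMoment, (hcorner t).2, mul_zero]⟩).congr_deriv ?_
  simp only [add_mul, mul_right_comm]
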